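/- Let u : ℝ³ → ℝ be a smooth solution of the Pavlov equation u_yy = u_tx + u_y·u_xx − u_x·u_xy (coordinates (t,x,y)). Then the function φ' := u_t − y·u_x + 2x satisfies the linearized equation φ'_yy = φ'_tx + u_y·φ'_xx + u_xx·φ'_y − u_x·φ'_xy − u_xy·φ'_x at every point of ℝ³ (i.e., φ' is a symmetry of the Pavlov equation). -/

import Mathlib

/-- Partial derivative of a function on `ℝ³` in the direction `v`. -/
noncomputable def pd (v : ℝ × ℝ × ℝ) (f : ℝ × ℝ × ℝ → ℝ) : ℝ × ℝ × ℝ → ℝ :=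
  fun p => fderiv ℝ f p v

/-- Coordinates are `(t, x, y)`. -/
noncomputable def dt : (ℝ × ℝ × ℝ → ℝ) → ℝ × ℝ × ℝ → ℝ := pd (1, 0, 0)
noncomputable def dx : (ℝ × ℝ × ℝ → ℝ) → ℝ × ℝ × ℝ → ℝ := pd (0, 1, 0)
noncomputable def dy : (ℝ × ℝ × ℝ → ℝ) → ℝ × ℝ × ℝ → ℝ := pd (0, 0, 1)

/-- The symmetry `φ' = u_t − y·u_x + 2x` of the Pavlov equation. -/
noncomputable def phi' (u : ℝ × ℝ × ℝ → ℝ) : ℝ × ℝ × ℝ → ℝ :=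
  fun p => dt u p - p.2.2 * dx u p + 2 * p.2.1

/-!
Write `E u = u_yy − u_tx − u_y·u_xx + u_x·u_xy` and let `L_u` be its linearization at `u`.
As `E` does not involve the coordinates, differentiating it in a direction `v` gives
`∂_v (E u) = L_u (∂_v u)`. The Leibniz rule gives
`L_u (y·ψ) = y·L_u ψ + 2·ψ_y − u_xx·ψ + u_x·ψ_x`, whose last two terms cancel for `ψ = u_x`;
the remaining `2·u_xy` equals `L_u (2x)`. Hence, for every `u` of class `C³`,
`L_u (u_t − y·u_x + 2x) = (∂_t − y·∂_x) (E u)`, which vanishes when `E u = 0`.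
-/

section PartialDerivative

variable {f g : ℝ × ℝ × ℝ → ℝ}

theorem contDiff_pd {n : WithTop ℕ∞} (v : ℝ × ℝ × ℝ) (hf : ContDiff ℝ (n + 1) f) :
    ContDiff ℝ n (pd v f) :=
  (hf.fderiv_right le_rfl).clm_apply contDiff_const

theorem differentiable_pd (v : ℝ × ℝ × ℝ) (hf : ContDiff ℝ 2 f) : Differentiable ℝ (pd v f) :=
  (contDiff_pd (n := 1) v hf).differentiable one_ne_zero

theorem pd_comm (v w : ℝ × ℝ × ℝ) (hf : ContDiff ℝ 2 f) : pd v (pd w f) = pd w (pd v f) := by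
  have hf' : Differentiable ℝ (fderiv ℝ f) :=
    (hf.fderiv_right (m := 1) le_rfl).differentiable one_ne_zero
  have pd_pd (a b p : ℝ × ℝ × ℝ) : pd a (pd b f) p = fderiv ℝ (fderiv ℝ f) p a b := by
    change fderiv ℝ (fun q => fderiv ℝ f q b) p a = _
    simp [fderiv_clm_apply (hf' p) (differentiableAt_const b)]
  funext p
  have hsymm : IsSymmSndFDerivAt ℝ f p := hf.contDiffAt.isSymmSndFDerivAt (by simp)
  rw [pd_pd, pd_pd, hsymm.eq]

theorem pd_add (v : ℝ × ℝ × ℝ) (hf : Differentiable ℝ f) (hg : Differentiable ℝ g) :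
    pd v (f + g) = pd v f + pd v g := by
  funext p
  simp [pd, fderiv_add (hf p) (hg p)]

theorem pd_sub (v : ℝ × ℝ × ℝ) (hf : Differentiable ℝ f) (hg : Differentiable ℝ g) :
    pd v (f - g) = pd v f - pd v g := by
  funext p
  simp [pd, fderiv_sub (hf p) (hg p)]

theorem pd_mul (v : ℝ × ℝ × ℝ) (hf : Differentiable ℝ f) (hg : Differentiable ℝ g) :
    pd v (f * g) = f * pd v g + pd v f * g := by
  funext p
  simp [pd, fderiv_mul (hf p) (hg p), mul_comm]

theorem pd_clm (v : ℝ × ℝ × ℝ) (l : ℝ × ℝ × ℝ →L[ℝ] ℝ) : pd v l = fun _ => l v := by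
  funext p
  simp [pd]

theorem pd_const (v : ℝ × ℝ × ℝ) (c : ℝ) : pd v (fun _ => c) = 0 := by
  funext p
  simp [pd]

theorem pd_pd_mul (v w : ℝ × ℝ × ℝ) (hf : ContDiff ℝ 2 f) (hg : ContDiff ℝ 2 g) :
    pd v (pd w (f * g)) =
      f * pd v (pd w g) + pd v f * pd w g + pd w f * pd v g + pd v (pd w f) * g := by
  have hf₁ := hf.differentiable two_ne_zero
  have hg₁ := hg.differentiable two_ne_zero
  have hfw := differentiable_pd w hf
  have hgw := differentiable_pd w hg
  rw [pd_mul w hf₁ hg₁, pd_add v (hf₁.mul hgw) (hfw.mul hg₁), pd_mul v hf₁ hgw, pd_mul v hfw hg₁]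
  ring

end PartialDerivative

/-- The differential operator `E u = u_yy − u_tx − u_y·u_xx + u_x·u_xy`, whose zeros are the
solutions of the Pavlov equation. -/
noncomputable def pavlovOperator (u : ℝ × ℝ × ℝ → ℝ) : ℝ × ℝ × ℝ → ℝ :=
  dy (dy u) - dx (dt u) - dy u * dx (dx u) + dx u * dy (dx u)

/-- The linearization of `pavlovOperator` at `u`, applied to `φ`. -/
noncomputable def pavlovLinearization (u φ : ℝ × ℝ × ℝ → ℝ) : ℝ × ℝ × ℝ → ℝ :=
  dy (dy φ) - dx (dt φ) - dy u * dx (dx φ) - dx (dx u) * dy φ + dx u * dy (dx φ) +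
    dy (dx u) * dx φ

/-- The coordinate function `x` as a continuous linear functional. -/
noncomputable def xCoord : ℝ × ℝ × ℝ →L[ℝ] ℝ :=
  .comp (.fst ℝ ℝ ℝ) (.snd ℝ ℝ (ℝ × ℝ))

/-- The coordinate function `y` as a continuous linear functional. -/
noncomputable def yCoord : ℝ × ℝ × ℝ →L[ℝ] ℝ :=
  .comp (.snd ℝ ℝ ℝ) (.snd ℝ ℝ (ℝ × ℝ))

@[simp]
theorem xCoord_apply (p : ℝ × ℝ × ℝ) : xCoord p = p.2.1 := rfl

@[simp]
theorem yCoord_apply (p : ℝ × ℝ × ℝ) : yCoord p = p.2.2 := rfl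

section Pavlov

variable {u φ ψ : ℝ × ℝ × ℝ → ℝ}

theorem pd_pavlovOperator (v : ℝ × ℝ × ℝ) (hu : ContDiff ℝ 3 u) :
    pd v (pavlovOperator u) = pavlovLinearization u (pd v u) := by
  have hu_two : ContDiff ℝ 2 u := hu.of_le (by norm_num)
  have hdu (a : ℝ × ℝ × ℝ) : Differentiable ℝ (pd a u) := differentiable_pd a hu_two
  have hddu (a b : ℝ × ℝ × ℝ) : Differentiable ℝ (pd a (pd b u)) :=
    differentiable_pd a (contDiff_pd b hu)
  have pd_pd_pd_comm (a b : ℝ × ℝ × ℝ) : pd v (pd a (pd b u)) = pd a (pd b (pd v u)) := by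
    rw [pd_comm v a (contDiff_pd b hu), pd_comm v b hu_two]
  unfold pavlovOperator pavlovLinearization dt dx dy
  rw [pd_add v (((hddu _ _).sub (hddu _ _)).sub ((hdu _).mul (hddu _ _))) ((hdu _).mul (hddu _ _)),
    pd_sub v ((hddu _ _).sub (hddu _ _)) ((hdu _).mul (hddu _ _)), pd_sub v (hddu _ _) (hddu _ _),
    pd_mul v (hdu _) (hddu _ _), pd_mul v (hdu _) (hddu _ _)]
  simp only [pd_pd_pd_comm, pd_comm v _ hu_two]
  ring

theorem pavlovLinearization_sub (u : ℝ × ℝ × ℝ → ℝ) (hφ : ContDiff ℝ 2 φ)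
    (hψ : ContDiff ℝ 2 ψ) :
    pavlovLinearization u (φ - ψ) = pavlovLinearization u φ - pavlovLinearization u ψ := by
  simp only [pavlovLinearization, dt, dx, dy,
    pd_sub _ (hφ.differentiable two_ne_zero) (hψ.differentiable two_ne_zero),
    pd_sub _ (differentiable_pd _ hφ) (differentiable_pd _ hψ)]
  ring

theorem pavlovLinearization_clm (u : ℝ × ℝ × ℝ → ℝ) (l : ℝ × ℝ × ℝ →L[ℝ] ℝ) :
    pavlovLinearization u l =
      fun p => dy (dx u) p * l (0, 1, 0) - dx (dx u) p * l (0, 0, 1) := by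
  funext p
  simp only [pavlovLinearization, dt, dx, dy, pd_clm, pd_const, Pi.add_apply, Pi.sub_apply,
    Pi.mul_apply, Pi.zero_apply]
  ring

theorem pavlovLinearization_mul (u : ℝ × ℝ × ℝ → ℝ) (hφ : ContDiff ℝ 2 φ)
    (hψ : ContDiff ℝ 2 ψ) :
    pavlovLinearization u (φ * ψ) =
      φ * pavlovLinearization u ψ + pavlovLinearization u φ * ψ + 2 * dy φ * dy ψ -
        (dx φ * dt ψ + dt φ * dx ψ) - 2 * dy u * dx φ * dx ψ +
        dx u * (dy φ * dx ψ + dx φ * dy ψ) := by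
  simp only [pavlovLinearization, dt, dx, dy, pd_pd_mul _ _ hφ hψ]
  simp only [pd_mul _ (hφ.differentiable two_ne_zero) (hψ.differentiable two_ne_zero)]
  ring

theorem pavlovLinearization_yCoord_mul (u : ℝ × ℝ × ℝ → ℝ) (hψ : ContDiff ℝ 2 ψ) :
    pavlovLinearization u (yCoord * ψ) =
      yCoord * pavlovLinearization u ψ + 2 * dy ψ - dx (dx u) * ψ + dx u * dx ψ := by
  funext p
  simp only [pavlovLinearization_mul u yCoord.contDiff hψ, pavlovLinearization_clm, dt, dx, dy,
    pd_clm, Pi.add_apply, Pi.sub_apply, Pi.mul_apply, Pi.ofNat_apply, yCoord_apply]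
  ring

theorem phi'_eq (u : ℝ × ℝ × ℝ → ℝ) :
    phi' u = dt u - (yCoord * dx u - ⇑((2 : ℝ) • xCoord)) := by
  funext p
  simp only [phi', Pi.sub_apply, Pi.mul_apply, smul_apply, xCoord_apply,
    yCoord_apply, smul_eq_mul]
  ring

theorem pavlovLinearization_phi' (hu : ContDiff ℝ 3 u) :
    pavlovLinearization u (phi' u) =
      dt (pavlovOperator u) - yCoord * dx (pavlovOperator u) := by
  have hut : ContDiff ℝ 2 (dt u) := contDiff_pd _ hu
  have hux : ContDiff ℝ 2 (dx u) := contDiff_pd _ hu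
  have hyux : ContDiff ℝ 2 (⇑yCoord * dx u) := yCoord.contDiff.mul hux
  have hx : ContDiff ℝ 2 ⇑((2 : ℝ) • xCoord) := ((2 : ℝ) • xCoord).contDiff
  have hyux_sub_x : ContDiff ℝ 2 (⇑yCoord * dx u - ⇑((2 : ℝ) • xCoord)) := hyux.sub hx
  have linearization_dt : pavlovLinearization u (dt u) = dt (pavlovOperator u) :=
    (pd_pavlovOperator _ hu).symm
  have linearization_dx : pavlovLinearization u (dx u) = dx (pavlovOperator u) :=
    (pd_pavlovOperator _ hu).symm
  have linearization_two_x :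
      pavlovLinearization u ⇑((2 : ℝ) • xCoord) = 2 * dy (dx u) := by
    funext p
    rw [pavlovLinearization_clm]
    simp [mul_comm]
  have linearization_y_mul_dx :
      pavlovLinearization u (yCoord * dx u) =
        yCoord * dx (pavlovOperator u) + 2 * dy (dx u) := by
    rw [pavlovLinearization_yCoord_mul u hux, linearization_dx]
    ring
  rw [phi'_eq, pavlovLinearization_sub u hut hyux_sub_x, pavlovLinearization_sub u hyux hx,
    linearization_dt, linearization_y_mul_dx, linearization_two_x]
  ring

end Pavlov

theorem pavlov_symmetry'_general (u : ℝ × ℝ × ℝ → ℝ)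
    (hu : ContDiff ℝ 3 u)
    (hsol : ∀ p : ℝ × ℝ × ℝ,
      dy (dy u) p = dx (dt u) p + dy u p * dx (dx u) p - dx u p * dy (dx u) p) :
    ∀ p : ℝ × ℝ × ℝ,
      dy (dy (phi' u)) p =
        dx (dt (phi' u)) p + dy u p * dx (dx (phi' u)) p + dx (dx u) p * dy (phi' u) p
          - dx u p * dy (dx (phi' u)) p - dy (dx u) p * dx (phi' u) p := by
  intro p
  have hE : pavlovOperator u = 0 := by
    funext q
    change dy (dy u) q - dx (dt u) q - dy u q * dx (dx u) q + dx u q * dy (dx u) q = 0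
    linear_combination hsol q
  have hL : pavlovLinearization u (phi' u) p = 0 := by
    rw [pavlovLinearization_phi' hu, hE]
    simp [dt, dx, pd]
  simp only [pavlovLinearization, Pi.add_apply, Pi.sub_apply, Pi.mul_apply] at hL
  linear_combination hL

/-- If `u` is a smooth solution of the Pavlov equation
`u_yy = u_tx + u_y·u_xx − u_x·u_xy`, then `φ' = u_t − y·u_x + 2x` satisfies the
linearized equation
`φ'_yy = φ'_tx + u_y·φ'_xx + u_xx·φ'_y − u_x·φ'_xy − u_xy·φ'_x`. -/
theorem pavlov_symmetry' (u : ℝ × ℝ × ℝ → ℝ)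
    (hu : ContDiff ℝ (⊤ : ℕ∞) u)
    (hsol : ∀ p : ℝ × ℝ × ℝ,
      dy (dy u) p = dx (dt u) p + dy u p * dx (dx u) p - dx u p * dy (dx u) p) :
    ∀ p : ℝ × ℝ × ℝ,
      dy (dy (phi' u)) p =
        dx (dt (phi' u)) p + dy u p * dx (dx (phi' u)) p + dx (dx u) p * dy (phi' u) p
          - dx u p * dy (dx (phi' u)) p - dy (dx u) p * dx (phi' u) p :=
  pavlov_symmetry'_general u (contDiff_infty.1 hu 3) hsol
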